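/- Let F be a field with char F ≠ 2 and let H be the Highwater algebra over F. For i ∈ ℤ let τ_i be the algebra automorphism of H with τ_i(a_j) = a_{2i−j} and τ_i(s_j) = s_j. Then the composition τ_0 ∘ τ_1 sends a_j to a_{j−2} for every j ∈ ℤ and has infinite order, and the subgroup of the automorphism group of H generated by {τ_i : i ∈ ℤ} equals the subgroup generated by τ_0 and τ_1 and is isomorphic to the infinite dihedral group. -/

import Mathlib

/- STATEMENT 8: τ_0 ∘ τ_1 sends a_j to a_{j-2} and has infinite order, and the\nMiyamoto group ⟨τ_i : i ∈ ℤ⟩ = ⟨τ_0, τ_1⟩ is infinite dihedral (DihedralGroup 0 is\nthe infinite dihedral group). -/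

/-- The underlying vector space of the Highwater algebra: formal `F`-linear combinations
of basis elements `a_i` (`i : ℤ`, encoded `Sum.inl i`) and `s_j` (`j ≥ 1`, encoded
`Sum.inr (j - 1)`). -/
abbrev HW (F : Type*) [Field F] := (ℤ ⊕ ℕ) →₀ F

variable (F : Type*) [Field F]

/-- The axis `a_i` of the Highwater algebra. -/
noncomputable def hwa (i : ℤ) : HW F := Finsupp.single (Sum.inl i) 1

/-- The element `s_j` of the Highwater algebra (`s_0 = 0`). -/
noncomputable def hws : ℕ → HW F
  | 0 => 0
  | j + 1 => Finsupp.single (Sum.inr j) 1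

/-- Product of two basis elements of the Highwater algebra:
`a_i · a_k = (1/2)(a_i + a_k) + s_{|i-k|}`,
`a_i · s_j = -(3/4) a_i + (3/8)(a_{i-j} + a_{i+j}) + (3/2) s_j`,
`s_j · s_k = (3/4)(s_j + s_k) - (3/8)(s_{|j-k|} + s_{j+k})`. -/
noncomputable def hwBM : ℤ ⊕ ℕ → ℤ ⊕ ℕ → HW F
  | Sum.inl i, Sum.inl k => ((1 : F) / 2) • (hwa F i + hwa F k) + hws F (i - k).natAbs
  | Sum.inl i, Sum.inr j =>
      (-(3 : F) / 4) • hwa F i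
        + ((3 : F) / 8) • (hwa F (i - ((j : ℤ) + 1)) + hwa F (i + ((j : ℤ) + 1)))
        + ((3 : F) / 2) • hws F (j + 1)
  | Sum.inr j, Sum.inl i =>
      (-(3 : F) / 4) • hwa F i
        + ((3 : F) / 8) • (hwa F (i - ((j : ℤ) + 1)) + hwa F (i + ((j : ℤ) + 1)))
        + ((3 : F) / 2) • hws F (j + 1)
  | Sum.inr j, Sum.inr k =>
      ((3 : F) / 4) • (hws F (j + 1) + hws F (k + 1))
        - ((3 : F) / 8) • (hws F ((j : ℤ) - (k : ℤ)).natAbs + hws F (j + k + 2))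

/-- The multiplication of the Highwater algebra: the bilinear extension of `hwBM`. -/
noncomputable def hwMul (x y : HW F) : HW F :=
  x.sum fun i ci => y.sum fun j cj => (ci * cj) • hwBM F i j

section ReflectionFamily

variable {G : Type*} [Group G] {t : ℤ → G}

/-- A family of involutions `t i` in a group with `t i * t j * t k = t (i - j + k)` defines a
homomorphism from the infinite dihedral group, sending the reflection `sr i` to `t i`. -/
def dihedralZeroLift (hinv : ∀ i, t i * t i = 1)
    (hmul : ∀ i j k, t i * t j * t k = t (i - j + k)) : DihedralGroup 0 →* G :=
  MonoidHom.mk'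
    (fun
      | .r n => t 0 * t (show ℤ from n)
      | .sr n => t (show ℤ from n))
    (by
      have hrr (i j : ℤ) : t 0 * t (i + j) = t 0 * t i * (t 0 * t j) := by
        rw [mul_assoc, ← mul_assoc (t i), hmul, sub_zero]
      have hrs (i j : ℤ) : t (j - i) = t 0 * t i * t j := by
        rw [hmul, zero_sub, neg_add_eq_sub]
      have hsr (i j : ℤ) : t (i + j) = t i * (t 0 * t j) := by
        rw [← mul_assoc, hmul, sub_zero]
      have hss (i j : ℤ) : t 0 * t (j - i) = t i * t j := by
        rw [hrs, ← mul_assoc, ← mul_assoc, hinv, one_mul]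
      rintro (i | i) (j | j)
      exacts [hrr i j, hrs i j, hsr i j, hss i j])

variable (hinv : ∀ i, t i * t i = 1) (hmul : ∀ i j k, t i * t j * t k = t (i - j + k))

theorem dihedralZeroLift_r (n : ℤ) :
    dihedralZeroLift hinv hmul (.r (show ZMod 0 from n)) = t 0 * t n := rfl

theorem dihedralZeroLift_sr (n : ℤ) :
    dihedralZeroLift hinv hmul (.sr (show ZMod 0 from n)) = t n := rfl

theorem dihedralZeroLift_injective (ht : Function.Injective t) :
    Function.Injective (dihedralZeroLift hinv hmul) := by
  rw [injective_iff_map_eq_one]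
  have hne (n : ℤ) : t n ≠ 1 := fun h => by
    have hn := hmul (n + 1) n (n + 1)
    rw [h, mul_one, hinv, ← h] at hn
    have := ht hn
    omega
  rintro (n | n) h
  · have h0 : t 0 * t (show ℤ from n) = t 0 * t 0 := h.trans (hinv 0).symm
    exact congrArg DihedralGroup.r (ht (mul_left_cancel h0))
  · exact absurd h (hne n)

theorem dihedralZeroLift_range :
    (dihedralZeroLift hinv hmul).range = Subgroup.closure (Set.range t) := by
  apply le_antisymm
  · have hmem : ∀ n, t n ∈ Subgroup.closure (Set.range t) :=
      fun n => Subgroup.subset_closure ⟨n, rfl⟩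
    rintro _ ⟨n | n, rfl⟩
    · exact mul_mem (hmem 0) (hmem n)
    · exact hmem n
  · rw [Subgroup.closure_le]
    rintro _ ⟨n, rfl⟩
    exact ⟨_, dihedralZeroLift_sr hinv hmul n⟩

theorem closure_range_eq_closure_pair
    (hmul : ∀ i j k, t i * t j * t k = t (i - j + k)) :
    Subgroup.closure (Set.range t) = Subgroup.closure {t 0, t 1} := by
  apply le_antisymm
  · have h0 : t 0 ∈ Subgroup.closure {t 0, t 1} := Subgroup.subset_closure (by simp)
    have h1 : t 1 ∈ Subgroup.closure {t 0, t 1} := Subgroup.subset_closure (by simp)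
    rw [Subgroup.closure_le]
    rintro _ ⟨n, rfl⟩
    change t n ∈ Subgroup.closure {t 0, t 1}
    induction n with
    | zero => exact h0
    | succ n ih =>
      rw [show (n : ℤ) + 1 = 1 - 0 + n by ring, ← hmul]
      exact mul_mem (mul_mem h1 h0) ih
    | pred n ih =>
      rw [show -(n : ℤ) - 1 = 0 - 1 + -n by ring, ← hmul]
      exact mul_mem (mul_mem h0 h1) ih
  · apply Subgroup.closure_mono
    rintro _ (rfl | rfl)
    exacts [⟨0, rfl⟩, ⟨1, rfl⟩]

end ReflectionFamily

theorem hwa_injective : Function.Injective (hwa F) := fun i j h => by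
  simpa using Finsupp.single_left_injective (one_ne_zero (α := F)) h

variable {F} in
theorem hw_linearEquiv_ext {f g : HW F ≃ₗ[F] HW F} (ha : ∀ i, f (hwa F i) = g (hwa F i))
    (hs : ∀ j, 1 ≤ j → f (hws F j) = g (hws F j)) : f = g := by
  apply LinearEquiv.toLinearMap_injective
  apply Finsupp.lhom_ext'
  rintro (i | j)
  · exact LinearMap.ext_ring (ha i)
  · exact LinearMap.ext_ring (hs (j + 1) (by omega))

theorem highwater_miyamoto_group (h2 : ringChar F ≠ 2)
    (tau : ℤ → (HW F ≃ₗ[F] HW F))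
    (hta : ∀ i j : ℤ, tau i (hwa F j) = hwa F (2 * i - j))
    (hts : ∀ (i : ℤ) (j : ℕ), 1 ≤ j → tau i (hws F j) = hws F j)
    (htm : ∀ (i : ℤ) (x y : HW F), tau i (hwMul F x y) = hwMul F (tau i x) (tau i y)) :
    (∀ j : ℤ, (tau 0 * tau 1) (hwa F j) = hwa F (j - 2)) ∧
    ¬ IsOfFinOrder (tau 0 * tau 1) ∧
    Subgroup.closure (Set.range tau) = Subgroup.closure {tau 0, tau 1} ∧
    Nonempty (↥(Subgroup.closure (Set.range tau)) ≃* DihedralGroup 0) := by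
  have hinv : ∀ i, tau i * tau i = 1 := fun i => by
    apply hw_linearEquiv_ext
    · intro k
      simp only [LinearEquiv.mul_apply, hta, LinearEquiv.coe_one, id_eq]
      congr 1
      ring
    · intro k hk
      simp only [LinearEquiv.mul_apply, hts _ k hk, LinearEquiv.coe_one, id_eq]
  have hmul : ∀ i j k, tau i * tau j * tau k = tau (i - j + k) := fun i j k => by
    apply hw_linearEquiv_ext
    · intro l
      simp only [LinearEquiv.mul_apply, hta]
      congr 1
      ring
    · intro l hl
      simp only [LinearEquiv.mul_apply, hts _ l hl]
  have hinj : Function.Injective tau := fun i j h => by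
    have h0 := congrArg (fun f : HW F ≃ₗ[F] HW F => f (hwa F 0)) h
    simp only [hta] at h0
    have h1 := hwa_injective F h0
    omega
  have hlift := dihedralZeroLift_injective hinv hmul hinj
  refine ⟨fun j => ?_, ?_, closure_range_eq_closure_pair hmul, ?_⟩
  · simp only [LinearEquiv.mul_apply, hta]
    congr 1
    ring
  · rw [← dihedralZeroLift_r hinv hmul 1, hlift.isOfFinOrder_iff]
    exact orderOf_eq_zero_iff.mp DihedralGroup.orderOf_r_one
  · rw [← dihedralZeroLift_range hinv hmul]
    exact ⟨(MonoidHom.ofInjective hlift).symm⟩
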